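/- Let H₁, H₂ : 𝕋^n × ℝ^n → ℝ be continuous and satisfy (A1), and suppose the initial data u₀₁, u₀₂ are Lipschitz continuous on 𝕋^n. Let (u₁, u₂) be the viscosity solution of (C) and let c be the ergodic constant of (E). Then the functions (x,t) ↦ u₁(x,t) + ct and (x,t) ↦ u₂(x,t) + ct are bounded and Lipschitz continuous on 𝕋^n × [0,∞). -/

import Mathlib

open MeasureTheory Filter Topology Set

noncomputable section

/-- Euclidean space `ℝ^n`; the torus `𝕋^n` is modelled by `ℤ^n`-periodic functions on it. -/
abbrev En (n : ℕ) : Type := EuclideanSpace ℝ (Fin n)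

/-- The integer vector `k ∈ ℤ^n` viewed as an element of `ℝ^n`. -/
def intVec (n : ℕ) (k : Fin n → ℤ) : En n := WithLp.toLp 2 fun i => (k i : ℝ)

/-- A `ℤ^n`-periodic function on `ℝ^n`, i.e. a function on the torus `𝕋^n`. -/
def ZPeriodic {n : ℕ} (f : En n → ℝ) : Prop :=
  ∀ (x : En n) (k : Fin n → ℤ), f (x + intVec n k) = f x

/-- A Hamiltonian `H : 𝕋^n × ℝ^n → ℝ` (periodic in the first variable). -/
def ZPeriodicH {n : ℕ} (H : En n → En n → ℝ) : Prop :=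
  ∀ (x : En n) (k : Fin n → ℤ) (p : En n), H (x + intVec n k) p = H x p

/-- A function on `𝕋^n × ℝ` (space-time, periodic in space). -/
def ZPeriodicST {n : ℕ} (u : En n × ℝ → ℝ) : Prop :=
  ∀ (x : En n) (k : Fin n → ℤ) (t : ℝ), u (x + intVec n k, t) = u (x, t)

/-- (A1): coercivity, `lim_{r→∞} inf{H(x,p) : x ∈ 𝕋^n, |p| ≥ r} = ∞`. -/
def Coercive {n : ℕ} (H : En n → En n → ℝ) : Prop :=
  ∀ M : ℝ, ∃ r : ℝ, ∀ (x p : En n), r ≤ ‖p‖ → M ≤ H x p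

/-- Coercivity for an `x`-independent Hamiltonian. -/
def CoerciveP {n : ℕ} (H : En n → ℝ) : Prop :=
  ∀ M : ℝ, ∃ r : ℝ, ∀ p : En n, r ≤ ‖p‖ → M ≤ H p

/-- Lipschitz continuity (membership in `W^{1,∞}`). -/
def IsLip {n : ℕ} (f : En n → ℝ) : Prop := ∃ K : NNReal, LipschitzWith K f

/-- Viscosity subsolution inequality for one stationary equation
`H(x, Dw) + c (w - wo) ≤ ρ(x)` of a weakly coupled system. -/
def StatSubIneq {n : ℕ} (H : En n → En n → ℝ) (c : ℝ) (w wo : En n → ℝ) (ρ : En n → ℝ) : Prop :=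
  ∀ φ : En n → ℝ, ContDiff ℝ 1 φ →
    ∀ x₀ : En n, IsLocalMax (fun x => w x - φ x) x₀ →
      H x₀ (gradient φ x₀) + c * (w x₀ - wo x₀) ≤ ρ x₀

/-- Viscosity supersolution inequality for one stationary equation. -/
def StatSuperIneq {n : ℕ} (H : En n → En n → ℝ) (c : ℝ) (w wo : En n → ℝ) (ρ : En n → ℝ) : Prop :=
  ∀ φ : En n → ℝ, ContDiff ℝ 1 φ →
    ∀ x₀ : En n, IsLocalMin (fun x => w x - φ x) x₀ →
      ρ x₀ ≤ H x₀ (gradient φ x₀) + c * (w x₀ - wo x₀)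

/-- Viscosity subsolution of the stationary system
`Hᵢ(x, Dwᵢ) + cᵢ (wᵢ - wⱼ) = ρᵢ(x)`, `i = 1,2`. -/
def CellSub {n : ℕ} (H₁ H₂ : En n → En n → ℝ) (c₁ c₂ : ℝ) (w₁ w₂ : En n → ℝ)
    (ρ₁ ρ₂ : En n → ℝ) : Prop :=
  StatSubIneq H₁ c₁ w₁ w₂ ρ₁ ∧ StatSubIneq H₂ c₂ w₂ w₁ ρ₂

/-- Viscosity supersolution of the stationary system. -/
def CellSuper {n : ℕ} (H₁ H₂ : En n → En n → ℝ) (c₁ c₂ : ℝ) (w₁ w₂ : En n → ℝ)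
    (ρ₁ ρ₂ : En n → ℝ) : Prop :=
  StatSuperIneq H₁ c₁ w₁ w₂ ρ₁ ∧ StatSuperIneq H₂ c₂ w₂ w₁ ρ₂

/-- Viscosity solution (continuous, sub- and supersolution) of the stationary system. -/
def CellSolution {n : ℕ} (H₁ H₂ : En n → En n → ℝ) (c₁ c₂ : ℝ) (v₁ v₂ : En n → ℝ)
    (ρ₁ ρ₂ : En n → ℝ) : Prop :=
  Continuous v₁ ∧ Continuous v₂ ∧
    CellSub H₁ H₂ c₁ c₂ v₁ v₂ ρ₁ ρ₂ ∧ CellSuper H₁ H₂ c₁ c₂ v₁ v₂ ρ₁ ρ₂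

/-- Subsolution of the ergodic problem (E) with constant `c` (coupling constants 1). -/
def ErgSub {n : ℕ} (H₁ H₂ : En n → En n → ℝ) (v₁ v₂ : En n → ℝ) (c : ℝ) : Prop :=
  CellSub H₁ H₂ 1 1 v₁ v₂ (fun _ => c) (fun _ => c)

/-- Supersolution of the ergodic problem (E). -/
def ErgSuper {n : ℕ} (H₁ H₂ : En n → En n → ℝ) (v₁ v₂ : En n → ℝ) (c : ℝ) : Prop :=
  CellSuper H₁ H₂ 1 1 v₁ v₂ (fun _ => c) (fun _ => c)

/-- Viscosity solution of the ergodic problem (E):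
`H₁(x,Dv₁) + v₁ - v₂ = c`, `H₂(x,Dv₂) + v₂ - v₁ = c` on `𝕋^n`. -/
def ErgSolution {n : ℕ} (H₁ H₂ : En n → En n → ℝ) (v₁ v₂ : En n → ℝ) (c : ℝ) : Prop :=
  CellSolution H₁ H₂ 1 1 v₁ v₂ (fun _ => c) (fun _ => c)

/-- Viscosity subsolution inequality for one evolution equation
`∂ₜ u + H(x, Du) + u - uo ≤ 0` in `𝕋^n × (0,∞)`. -/
def EvolSubIneq {n : ℕ} (H : En n → En n → ℝ) (u uo : En n × ℝ → ℝ) : Prop :=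
  ∀ φ : En n × ℝ → ℝ, ContDiff ℝ 1 φ →
    ∀ (x₀ : En n) (t₀ : ℝ), 0 < t₀ →
      IsLocalMax (fun q => u q - φ q) (x₀, t₀) →
      fderiv ℝ φ (x₀, t₀) (0, 1) + H x₀ (gradient (fun y => φ (y, t₀)) x₀)
        + u (x₀, t₀) - uo (x₀, t₀) ≤ 0

/-- Viscosity supersolution inequality for one evolution equation. -/
def EvolSuperIneq {n : ℕ} (H : En n → En n → ℝ) (u uo : En n × ℝ → ℝ) : Prop :=
  ∀ φ : En n × ℝ → ℝ, ContDiff ℝ 1 φ →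
    ∀ (x₀ : En n) (t₀ : ℝ), 0 < t₀ →
      IsLocalMin (fun q => u q - φ q) (x₀, t₀) →
      0 ≤ fderiv ℝ φ (x₀, t₀) (0, 1) + H x₀ (gradient (fun y => φ (y, t₀)) x₀)
        + u (x₀, t₀) - uo (x₀, t₀)

/-- Viscosity subsolution of system (C) (with coupling constants `c₁ = c₂ = 1`). -/
def SysSub {n : ℕ} (H₁ H₂ : En n → En n → ℝ) (u₁ u₂ : En n × ℝ → ℝ) : Prop :=
  EvolSubIneq H₁ u₁ u₂ ∧ EvolSubIneq H₂ u₂ u₁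

/-- Viscosity supersolution of system (C). -/
def SysSuper {n : ℕ} (H₁ H₂ : En n → En n → ℝ) (u₁ u₂ : En n × ℝ → ℝ) : Prop :=
  EvolSuperIneq H₁ u₁ u₂ ∧ EvolSuperIneq H₂ u₂ u₁

/-- Viscosity solution of the Cauchy problem (C): continuous on `𝕋^n × [0,∞)`,
sub- and supersolution, attaining the initial data. -/
def SysSolution {n : ℕ} (H₁ H₂ : En n → En n → ℝ) (u₀₁ u₀₂ : En n → ℝ)
    (u₁ u₂ : En n × ℝ → ℝ) : Prop :=
  ContinuousOn u₁ {q : En n × ℝ | 0 ≤ q.2} ∧ ContinuousOn u₂ {q : En n × ℝ | 0 ≤ q.2} ∧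
    SysSub H₁ H₂ u₁ u₂ ∧ SysSuper H₁ H₂ u₁ u₂ ∧
    (∀ x, u₁ (x, 0) = u₀₁ x) ∧ (∀ x, u₂ (x, 0) = u₀₂ x)

/-- Viscosity subsolution of the single stationary equation `H(x,Dv) ≤ c` on `𝕋^n`. -/
def SingleSub {n : ℕ} (H : En n → En n → ℝ) (v : En n → ℝ) (c : ℝ) : Prop :=
  ∀ φ : En n → ℝ, ContDiff ℝ 1 φ →
    ∀ x₀ : En n, IsLocalMax (fun x => v x - φ x) x₀ → H x₀ (gradient φ x₀) ≤ c

/-- Viscosity supersolution of the single stationary equation `H(x,Dv) ≥ c` on `𝕋^n`. -/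
def SingleSuper {n : ℕ} (H : En n → En n → ℝ) (v : En n → ℝ) (c : ℝ) : Prop :=
  ∀ φ : En n → ℝ, ContDiff ℝ 1 φ →
    ∀ x₀ : En n, IsLocalMin (fun x => v x - φ x) x₀ → c ≤ H x₀ (gradient φ x₀)

/-- Viscosity solution of the single stationary equation `H(x,Dv) = c` on `𝕋^n`. -/
def SingleSolution {n : ℕ} (H : En n → En n → ℝ) (v : En n → ℝ) (c : ℝ) : Prop :=
  Continuous v ∧ SingleSub H v c ∧ SingleSuper H v c

/-- Uniform convergence `u(·,t) → v` on `𝕋^n` as `t → ∞`. -/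
def UnifTendsTo {n : ℕ} (u : En n × ℝ → ℝ) (v : En n → ℝ) : Prop :=
  ∀ ε : ℝ, 0 < ε → ∃ T : ℝ, ∀ t : ℝ, T ≤ t → ∀ x : En n, |u (x, t) - v x| ≤ ε

/-- (A8)⁺ at level `η` with constant `ψ`. -/
def A8plusAt {n : ℕ} (H : En n → En n → ℝ) (η ψ : ℝ) : Prop :=
  ∀ (x p q : En n), η ≤ H x (p + q) → H x q ≤ 0 →
    ∀ μ : ℝ, 0 < μ → μ ≤ 1 → H x (p + q) + ψ * (1 - μ) ≤ μ * H x (μ⁻¹ • p + q)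

/-- (A8)⁻ at level `η` with constant `ψ`. -/
def A8minusAt {n : ℕ} (H : En n → En n → ℝ) (η ψ : ℝ) : Prop :=
  ∀ (x p q : En n), H x (p + q) ≤ -η → 0 ≤ H x q →
    ∀ μ : ℝ, 1 ≤ μ → μ * H x (μ⁻¹ • p + q) ≤ H x (p + q) - ψ * (μ - 1) / μ

/-- (A8)⁺ with threshold `η₀`. -/
def A8plus {n : ℕ} (H : En n → En n → ℝ) (η₀ : ℝ) : Prop :=
  ∀ η : ℝ, 0 < η → η ≤ η₀ → ∃ ψ : ℝ, 0 < ψ ∧ A8plusAt H η ψ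

/-- (A8)⁻ with threshold `η₀`. -/
def A8minus {n : ℕ} (H : En n → En n → ℝ) (η₀ : ℝ) : Prop :=
  ∀ η : ℝ, 0 < η → η ≤ η₀ → ∃ ψ : ℝ, 0 < ψ ∧ A8minusAt H η ψ

/-- The function `F` of the Key Lemma: `F(r) = C r` for `r ≥ 0`, `F(r) = r / C` for `r < 0`. -/
def Fc (C r : ℝ) : ℝ := if 0 ≤ r then C * r else r / C

/-- `α_η⁺(s)` (resp. `β_η⁺(s)` with `u = u₂`):
`min_{x ∈ 𝕋^n, t ≥ s} (u(x,t) - v(x) + η (t-s)) / (u(x,s) - v(x))`. -/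
def alphaPlus {n : ℕ} (u : En n × ℝ → ℝ) (v : En n → ℝ) (η s : ℝ) : ℝ :=
  sInf {r : ℝ | ∃ (x : En n) (t : ℝ), s ≤ t ∧
    r = (u (x, t) - v x + η * (t - s)) / (u (x, s) - v x)}

/-- `α_η⁻(s)` (resp. `β_η⁻(s)` with `u = u₂`):
`max_{x ∈ 𝕋^n, t ≥ s} (u(x,t) - v(x) - η (t-s)) / (u(x,s) - v(x))`. -/
def alphaMinus {n : ℕ} (u : En n × ℝ → ℝ) (v : En n → ℝ) (η s : ℝ) : ℝ :=
  sSup {r : ℝ | ∃ (x : En n) (t : ℝ), s ≤ t ∧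
    r = (u (x, t) - v x - η * (t - s)) / (u (x, s) - v x)}

/-- (A9)⁺. -/
def A9plus {n : ℕ} (H : En n → En n → ℝ) : Prop :=
  ∃ K : Set (En n), IsClosed K ∧ (∀ x ∈ K, ∀ k : Fin n → ℤ, x + intVec n k ∈ K) ∧
    (∀ x ∈ K, (∀ p : En n, 0 ≤ H x p) ∧ ∃ p : En n, H x p = 0) ∧
    (∀ ε : ℝ, 0 < ε → ∃ η₀ : ℝ, 0 < η₀ ∧ ∃ ψ : ℝ → ℝ, (∀ r : ℝ, 0 < r → 0 < ψ r) ∧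
      ∀ η : ℝ, 0 < η → η ≤ η₀ → ∀ (x p q : En n), ε ≤ Metric.infDist x K →
        η ≤ H x (p + q) → H x q ≤ 0 →
        ∀ μ : ℝ, 0 < μ → μ ≤ 1 → H x (p + q) + ψ η * (1 - μ) ≤ μ * H x (μ⁻¹ • p + q))

/-- (A9)⁻. -/
def A9minus {n : ℕ} (H : En n → En n → ℝ) : Prop :=
  ∃ K : Set (En n), IsClosed K ∧ (∀ x ∈ K, ∀ k : Fin n → ℤ, x + intVec n k ∈ K) ∧
    (∀ x ∈ K, (∀ p : En n, 0 ≤ H x p) ∧ ∃ p : En n, H x p = 0) ∧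
    (∀ ε : ℝ, 0 < ε → ∃ η₀ : ℝ, 0 < η₀ ∧ ∃ ψ : ℝ → ℝ, (∀ r : ℝ, 0 < r → 0 < ψ r) ∧
      ∀ η : ℝ, 0 < η → η ≤ η₀ → ∀ (x p q : En n), ε ≤ Metric.infDist x K →
        H x (p + q) ≤ -η → 0 ≤ H x q →
        ∀ μ : ℝ, 1 ≤ μ → μ * H x (μ⁻¹ • p + q) ≤ H x (p + q) - ψ η * (μ - 1) / μ)

/-- (A6): uniform convexity of an `x`-independent Hamiltonian. -/
def UnifConvex {n : ℕ} (H : En n → ℝ) : Prop :=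
  ∃ α : ℝ, 0 < α ∧ ∀ᵐ q : En n ∂volume, DifferentiableAt ℝ H q ∧
    ∀ p : En n, H q + fderiv ℝ H q (p - q) + α * ‖p - q‖ ^ 2 ≤ H p

end


/-! ### Helper material -/

theorem exists_shift (n : ℕ) : ∀ x : En n, ∃ k : Fin n → ℤ, ‖x + intVec n k‖ ≤ Real.sqrt n := by
  intro x
  refine ⟨fun i => -⌊x i⌋, ?_⟩
  rw [EuclideanSpace.norm_eq]
  apply Real.sqrt_le_sqrt
  have : ∀ i ∈ (Finset.univ : Finset (Fin n)),
      ‖(x + intVec n (fun i => -⌊x i⌋)) i‖ ^ 2 ≤ (1 : ℝ) := by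
    intro i _
    have h1 : (x + intVec n (fun i => -⌊x i⌋)) i = Int.fract (x i) := by
      simp [intVec, Int.fract, sub_eq_add_neg]
    rw [h1, Real.norm_eq_abs, abs_of_nonneg (Int.fract_nonneg _)]
    have := Int.fract_lt_one (x i)
    have := Int.fract_nonneg (x i)
    nlinarith
  calc _ ≤ ∑ i : Fin n, (1 : ℝ) := Finset.sum_le_sum this
    _ = n := by simp

theorem per_unif {n : ℕ} {X : Type*} [MetricSpace X] (f : En n → X → ℝ) (K : Set X)
    (hK : IsCompact K) (hf : ContinuousOn (fun q : En n × X => f q.1 q.2) (univ ×ˢ K))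
    (hper : ∀ (x : En n) (k : Fin n → ℤ), ∀ a, f (x + intVec n k) a = f x a) (e : ℝ) (he : 0 < e) :
    ∃ d > 0, ∀ x y : En n, ∀ a ∈ K, ∀ b ∈ K, dist x y < d → dist a b < d →
      |f x a - f y b| < e := by
  have hc : IsCompact (Metric.closedBall (0 : En n) (Real.sqrt n + 1) ×ˢ K) :=
    (isCompact_closedBall _ _).prod hK
  have hu := hc.uniformContinuousOn_of_continuous (hf.mono (prod_mono (subset_univ _) le_rfl))
  rw [Metric.uniformContinuousOn_iff] at hu
  obtain ⟨d, hd, h⟩ := hu e he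
  refine ⟨min d 1, by positivity, ?_⟩
  intro x y a ha b hb hxy hab
  obtain ⟨k, hk⟩ := exists_shift n x
  have h1 := h (x + intVec n k, a) ⟨by simp; linarith, ha⟩ (y + intVec n k, b)
    ⟨by
      simp only [mem_closedBall_zero_iff]
      have e1 : y + intVec n k = (x + intVec n k) - (x - y) := by abel
      rw [e1]
      have := norm_sub_le (x + intVec n k) (x - y)
      rw [dist_eq_norm] at hxy
      have := hxy.trans_le (min_le_right _ _)
      linarith, hb⟩
    (by
      rw [Prod.dist_eq]
      simp only [dist_add_right]
      exact max_lt (hxy.trans_le (min_le_left _ _)) (hab.trans_le (min_le_left _ _)))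
  simp only [hper, Real.dist_eq] at h1
  exact h1

theorem per_bdd {n : ℕ} {X : Type*} [MetricSpace X] (f : En n → X → ℝ) (K : Set X)
    (hK : IsCompact K) (hf : ContinuousOn (fun q : En n × X => f q.1 q.2) (univ ×ˢ K))
    (hper : ∀ (x : En n) (k : Fin n → ℤ), ∀ a, f (x + intVec n k) a = f x a) :
    ∃ C : ℝ, 0 ≤ C ∧ ∀ x : En n, ∀ a ∈ K, |f x a| ≤ C := by
  have hc : IsCompact (Metric.closedBall (0 : En n) (Real.sqrt n) ×ˢ K) :=
    (isCompact_closedBall _ _).prod hK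
  obtain ⟨C, hC⟩ := hc.exists_bound_of_continuousOn
    (hf.mono (prod_mono (subset_univ _) le_rfl))
  refine ⟨max C 0, le_max_right _ _, ?_⟩
  intro x a ha
  obtain ⟨k, hk⟩ := exists_shift n x
  have := hC (x + intVec n k, a) ⟨by simpa using hk, ha⟩
  simp only [hper, Real.norm_eq_abs] at this
  exact this.trans (le_max_left _ _)

def JSub {n : ℕ} (H : En n → En n → ℝ) (u uo : En n × ℝ → ℝ) : Prop :=
  ∀ (x : En n) (t : ℝ) (p : En n) (a A : ℝ), 0 < t →
    (∀ᶠ q in 𝓝 (x, t), u q ≤ u (x, t) + (inner ℝ p (q.1 - x) + a * (q.2 - t)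
      + A * (‖q.1 - x‖ ^ 2 + (q.2 - t) ^ 2))) →
    a + H x p + u (x, t) - uo (x, t) ≤ 0

def JSuper {n : ℕ} (H : En n → En n → ℝ) (u uo : En n × ℝ → ℝ) : Prop :=
  ∀ (x : En n) (t : ℝ) (p : En n) (a A : ℝ), 0 < t →
    (∀ᶠ q in 𝓝 (x, t), u (x, t) + (inner ℝ p (q.1 - x) + a * (q.2 - t)
      + A * (‖q.1 - x‖ ^ 2 + (q.2 - t) ^ 2)) ≤ u q) →
    0 ≤ a + H x p + u (x, t) - uo (x, t)

noncomputable def qf {n : ℕ} (x : En n) (t : ℝ) (p : En n) (a A : ℝ) (q : En n × ℝ) : ℝ :=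
  inner ℝ p (q.1 - x) + a * (q.2 - t) + A * (‖q.1 - x‖ ^ 2 + (q.2 - t) ^ 2)

theorem qf_contDiff {n : ℕ} (x : En n) (t : ℝ) (p : En n) (a A : ℝ) :
    ContDiff ℝ 1 (qf x t p a A) := by
  unfold qf
  have h1 : ContDiff ℝ 1 (fun q : En n × ℝ => q.1 - x) := contDiff_fst.sub contDiff_const
  have h2 : ContDiff ℝ 1 (fun q : En n × ℝ => q.2 - t) := contDiff_snd.sub contDiff_const
  exact ((contDiff_const.inner ℝ h1).add (contDiff_const.mul h2)).add
    (contDiff_const.mul ((h1.norm_sq ℝ).add (h2.pow 2)))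

theorem qf_grad {n : ℕ} (x : En n) (p : En n) (b A : ℝ) :
    gradient (fun y : En n => inner ℝ p (y - x) + b + A * (‖y - x‖ ^ 2 + 0)) x = p := by
  apply HasGradientAt.gradient
  rw [hasGradientAt_iff_hasFDerivAt]
  have h1 : HasFDerivAt (fun y : En n => y - x) (ContinuousLinearMap.id ℝ (En n)) x :=
    (hasFDerivAt_id x).sub_const x
  have h2 : HasFDerivAt (fun y : En n => inner ℝ p (y - x)) (InnerProductSpace.toDual ℝ (En n) p) x := by
    exact ((InnerProductSpace.toDual ℝ (En n) p).hasFDerivAt (x := x - x)).comp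
      (g := fun z => InnerProductSpace.toDual ℝ (En n) p z) (f := fun y => y - x) x h1
  have h3 := h1.norm_sq
  have h4 := (h2.add_const b).add ((h3.add_const 0).const_mul A)
  refine HasFDerivAt.congr_fderiv (f := fun y : En n => inner ℝ p (y - x) + b + A * (‖y - x‖ ^ 2 + 0)) h4 ?_
  ext z
  simp

theorem qf_dt {n : ℕ} (x : En n) (t : ℝ) (p : En n) (a A : ℝ) :
    fderiv ℝ (qf x t p a A) (x, t) (0, 1) = a := by
  have hd : DifferentiableAt ℝ (qf x t p a A) (x, t) :=
    (qf_contDiff x t p a A).differentiable (by norm_num) _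
  have h1 : HasDerivAt (fun s : ℝ => ((x, s) : En n × ℝ)) (0, 1) t :=
    (hasDerivAt_const t x).prodMk (hasDerivAt_id t)
  have h2 : HasDerivAt (fun s : ℝ => qf x t p a A (x, s)) (fderiv ℝ (qf x t p a A) (x, t) (0, 1)) t :=
    hd.hasFDerivAt.comp_hasDerivAt t h1
  have h3 : HasDerivAt (fun s : ℝ => qf x t p a A (x, s)) a t := by
    have h5 : HasDerivAt (fun s : ℝ => s - t) 1 t := (hasDerivAt_id t).sub_const t
    have h4 := ((h5.const_mul a).const_add (inner ℝ p (x - x))).add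
      (((h5.pow 2).const_add (‖x - x‖ ^ 2)).const_mul A)
    refine HasDerivAt.congr_deriv (f := fun s : ℝ => qf x t p a A (x, s)) h4 ?_
    simp
  exact h2.unique h3

theorem JSub_of_evol {n : ℕ} {H : En n → En n → ℝ} {u uo : En n × ℝ → ℝ}
    (h : EvolSubIneq H u uo) : JSub H u uo := by
  intro x t p a A ht hq
  have := h (qf x t p a A) (qf_contDiff x t p a A) x t ht (by
    filter_upwards [hq] with q hq
    simp [qf] at hq ⊢
    linarith)
  rw [qf_dt] at this
  have hg : gradient (fun y => qf x t p a A (y, t)) x = p := by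
    have := qf_grad x p 0 A
    simpa [qf] using this
  rwa [hg] at this

theorem JSuper_of_evol {n : ℕ} {H : En n → En n → ℝ} {u uo : En n × ℝ → ℝ}
    (h : EvolSuperIneq H u uo) : JSuper H u uo := by
  intro x t p a A ht hq
  have := h (qf x t p a A) (qf_contDiff x t p a A) x t ht (by
    filter_upwards [hq] with q hq
    simp [qf] at hq ⊢
    linarith)
  rw [qf_dt] at this
  have hg : gradient (fun y => qf x t p a A (y, t)) x = p := by
    have := qf_grad x p 0 A
    simpa [qf] using this
  rwa [hg] at this

theorem small_pos {P : ℝ → Prop} (h : ∀ᶠ τ in 𝓝 (0 : ℝ), P τ) (d : ℝ) (hd : 0 < d) :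
    ∃ τ, 0 < τ ∧ τ < d ∧ P τ := by
  have h1 : ∀ᶠ τ in 𝓝[>] (0 : ℝ), P τ := h.filter_mono nhdsWithin_le_nhds
  have h2 : ∀ᶠ τ in 𝓝[>] (0 : ℝ), τ ∈ Ioo 0 d := Ioo_mem_nhdsGT hd
  obtain ⟨τ, a, b⟩ := (h1.and h2).exists
  exact ⟨τ, b.1, b.2, a⟩

theorem one_dim {α β : ℝ} (h : ∀ᶠ τ in 𝓝 (0 : ℝ), 0 < τ → α * τ ≤ β * τ ^ 2) : α ≤ 0 := by
  by_contra hα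
  push Not at hα
  obtain ⟨τ, h1, h2, h3⟩ := small_pos h (α / (|β| + 1)) (by positivity)
  have h4 := h3 h1
  rw [lt_div_iff₀ (by positivity)] at h2
  have h5 : β * τ ^ 2 ≤ |β| * τ ^ 2 := by gcongr; exact le_abs_self _
  have : τ * (τ * (|β| + 1)) < τ * α := by gcongr
  nlinarith

theorem ev_line {n : ℕ} {P : En n × ℝ → Prop} {x : En n} {t : ℝ}
    (h : ∀ᶠ q in 𝓝 (x, t), P q) (z : En n) (b : ℝ) :
    ∀ᶠ τ in 𝓝 (0 : ℝ), P (x + τ • z, t + τ * b) := by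
  have hc : Continuous (fun τ : ℝ => ((x + τ • z, t + τ * b) : En n × ℝ)) := by fun_prop
  have := hc.tendsto 0
  simp only [zero_smul, add_zero, zero_mul] at this
  exact this.eventually h

/-- stationary subsolutions -/
theorem JSub_of_stat {n : ℕ} {H : En n → En n → ℝ} {v vo : En n → ℝ} {c : ℝ}
    (h : StatSubIneq H 1 v vo (fun _ => c)) (m : ℝ) :
    JSub H (fun q => v q.1 - c * q.2 + m) (fun q => vo q.1 - c * q.2 + m) := by
  intro x t p a A ht hq
  have ha1 : -c - a ≤ 0 := by
    apply one_dim (β := A)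
    filter_upwards [ev_line hq 0 1] with τ h1 _
    simp at h1
    nlinarith
  have ha2 : c + a ≤ 0 := by
    apply one_dim (β := A)
    filter_upwards [ev_line hq 0 (-1)] with τ h1 _
    simp at h1
    nlinarith
  have hx : ∀ᶠ y in 𝓝 x, v y ≤ v x + (inner ℝ p (y - x) + A * ‖y - x‖ ^ 2) := by
    have hc : Continuous (fun y : En n => ((y, t) : En n × ℝ)) := by fun_prop
    filter_upwards [(hc.tendsto x).eventually hq] with y hy
    simp at hy
    linarith
  have := h (fun y => inner ℝ p (y - x) + 0 + A * (‖y - x‖ ^ 2 + 0)) (by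
      have h1 : ContDiff ℝ 1 (fun q : En n => q - x) := contDiff_id.sub contDiff_const
      exact ((contDiff_const.inner ℝ h1).add contDiff_const).add
        (contDiff_const.mul ((h1.norm_sq ℝ).add contDiff_const))) x (by
      filter_upwards [hx] with y hy
      simp
      linarith)
  rw [qf_grad] at this
  simp only
  linarith

theorem JSuper_of_stat {n : ℕ} {H : En n → En n → ℝ} {v vo : En n → ℝ} {c : ℝ}
    (h : StatSuperIneq H 1 v vo (fun _ => c)) (m : ℝ) :
    JSuper H (fun q => v q.1 - c * q.2 + m) (fun q => vo q.1 - c * q.2 + m) := by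
  intro x t p a A ht hq
  have ha1 : c + a ≤ 0 := by
    apply one_dim (β := -A)
    filter_upwards [ev_line hq 0 1] with τ h1 _
    simp at h1
    nlinarith
  have ha2 : -c - a ≤ 0 := by
    apply one_dim (β := -A)
    filter_upwards [ev_line hq 0 (-1)] with τ h1 _
    simp at h1
    nlinarith
  have hx : ∀ᶠ y in 𝓝 x, v x + (inner ℝ p (y - x) + A * ‖y - x‖ ^ 2) ≤ v y := by
    have hc : Continuous (fun y : En n => ((y, t) : En n × ℝ)) := by fun_prop
    filter_upwards [(hc.tendsto x).eventually hq] with y hy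
    simp at hy
    linarith
  have := h (fun y => inner ℝ p (y - x) + 0 + A * (‖y - x‖ ^ 2 + 0)) (by
      have h1 : ContDiff ℝ 1 (fun q : En n => q - x) := contDiff_id.sub contDiff_const
      exact ((contDiff_const.inner ℝ h1).add contDiff_const).add
        (contDiff_const.mul ((h1.norm_sq ℝ).add contDiff_const))) x (by
      filter_upwards [hx] with y hy
      simp
      linarith)
  rw [qf_grad] at this
  simp only
  linarith

theorem JSub_of_lip {n : ℕ} {H : En n → En n → ℝ} {f g : En n → ℝ} {K : NNReal}
    (hf : LipschitzWith K f) (L : ℝ)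
    (hL : ∀ x p, ‖p‖ ≤ K → H x p + f x - g x ≤ L) :
    JSub H (fun q => f q.1 - L * q.2) (fun q => g q.1 - L * q.2) := by
  intro x t p a A ht hq
  have ha2 : L + a ≤ 0 := by
    apply one_dim (β := A)
    filter_upwards [ev_line hq 0 (-1)] with τ h1 _
    simp at h1
    nlinarith
  have hp : ‖p‖ * ‖p‖ - K * ‖p‖ ≤ 0 := by
    apply one_dim (β := A * ‖p‖ ^ 2)
    filter_upwards [ev_line hq (-p) 0] with τ h1 h2
    have h3 := hf.dist_le_mul x (x + τ • (-p))
    rw [Real.dist_eq] at h3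
    have h4 := (le_abs_self _).trans h3
    simp [norm_smul, abs_of_pos h2, inner_smul_right] at h1 h4
    nlinarith
  have hp' : ‖p‖ ≤ K := by
    by_contra hcon
    push Not at hcon
    have : (0 : ℝ) ≤ K := K.2
    nlinarith
  have := hL x p hp'
  simp only
  linarith

theorem JSuper_of_lip {n : ℕ} {H : En n → En n → ℝ} {f g : En n → ℝ} {K : NNReal}
    (hf : LipschitzWith K f) (L : ℝ)
    (hL : ∀ x p, ‖p‖ ≤ K → -L ≤ H x p + f x - g x) :
    JSuper H (fun q => f q.1 + L * q.2) (fun q => g q.1 + L * q.2) := by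
  intro x t p a A ht hq
  have ha2 : L - a ≤ 0 := by
    apply one_dim (β := -A)
    filter_upwards [ev_line hq 0 (-1)] with τ h1 _
    simp at h1
    nlinarith
  have hp : ‖p‖ * ‖p‖ - K * ‖p‖ ≤ 0 := by
    apply one_dim (β := -A * ‖p‖ ^ 2)
    filter_upwards [ev_line hq p 0] with τ h1 h2
    have h3 := hf.dist_le_mul (x + τ • p) x
    rw [Real.dist_eq] at h3
    have h4 := (le_abs_self _).trans h3
    simp [norm_smul, abs_of_pos h2, inner_smul_right] at h1 h4
    nlinarith
  have hp' : ‖p‖ ≤ K := by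
    by_contra hcon
    push Not at hcon
    have : (0 : ℝ) ≤ K := K.2
    nlinarith
  have := hL x p hp'
  simp only
  linarith

theorem JSub_shift {n : ℕ} {H : En n → En n → ℝ} {u uo : En n × ℝ → ℝ} (h : JSub H u uo)
    (τ m : ℝ) (hτ : 0 ≤ τ) :
    JSub H (fun q => u (q.1, q.2 + τ) + m) (fun q => uo (q.1, q.2 + τ) + m) := by
  intro x t p a A ht hq
  have := h x (t + τ) p a A (by linarith) (by
    have hc : Continuous (fun q : En n × ℝ => ((q.1, q.2 - τ) : En n × ℝ)) := by fun_prop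
    have h1 := hc.tendsto (x, t + τ)
    simp only [add_sub_cancel_right] at h1
    filter_upwards [h1.eventually hq] with q hq
    simp only [sub_add_cancel] at hq
    rw [show q.2 - (t + τ) = q.2 - τ - t by ring]
    have : (q.1, q.2) = q := rfl
    rw [this] at hq
    linarith)
  simp only
  linarith

theorem JSuper_shift {n : ℕ} {H : En n → En n → ℝ} {u uo : En n × ℝ → ℝ} (h : JSuper H u uo)
    (τ m : ℝ) (hτ : 0 ≤ τ) :
    JSuper H (fun q => u (q.1, q.2 + τ) + m) (fun q => uo (q.1, q.2 + τ) + m) := by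
  intro x t p a A ht hq
  have := h x (t + τ) p a A (by linarith) (by
    have hc : Continuous (fun q : En n × ℝ => ((q.1, q.2 - τ) : En n × ℝ)) := by fun_prop
    have h1 := hc.tendsto (x, t + τ)
    simp only [add_sub_cancel_right] at h1
    filter_upwards [h1.eventually hq] with q hq
    simp only [sub_add_cancel] at hq
    rw [show q.2 - (t + τ) = q.2 - τ - t by ring]
    have : (q.1, q.2) = q := rfl
    rw [this] at hq
    linarith)
  simp only
  linarith

noncomputable def Phi {n : ℕ} (u w : En n × ℝ → ℝ) (e d η A T : ℝ) (x : En n) (t : ℝ) (y : En n)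
    (s : ℝ) : ℝ :=
  u (x, t) - w (y, s) - e * ‖x - y‖ ^ 2 - d * (t - s) ^ 2 - (η * t + A * (max (t - T) 0) ^ 2)

theorem max_sq (t t' T : ℝ) :
    (max (t' - T) 0) ^ 2 ≤ (max (t - T) 0) ^ 2 + 2 * max (t - T) 0 * (t' - t) + (t' - t) ^ 2 := by
  rcases le_total (t - T) 0 with h | h <;> rcases le_total (t' - T) 0 with h' | h' <;>
    simp only [max_eq_left, max_eq_right, h, h'] <;> nlinarith

theorem sq_expand {n : ℕ} (x x' y : En n) :
    ‖x' - y‖ ^ 2 = ‖x - y‖ ^ 2 + 2 * inner ℝ (x - y) (x' - x) + ‖x' - x‖ ^ 2 := by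
  rw [show x' - y = (x - y) + (x' - x) by abel, norm_add_sq_real]

theorem core {n : ℕ} {H : En n → En n → ℝ} {u uo w wo : En n × ℝ → ℝ} (hs : JSub H u uo)
    (hS : JSuper H w wo) {e d η A T T' C R : ℝ} (he : 0 < e) (hd : 0 < d) (hη : 0 < η) (hA : 0 ≤ A)
    (hR : ∀ x p, H x p ≤ 2 * d + 2 * C → ‖p‖ ≤ R)
    (hu : ∀ x y p, ‖p‖ ≤ R → ‖x - y‖ * (2 * e) ≤ R → |H x p - H y p| < η)
    {x y : En n} {t s : ℝ} (ht : 0 < t) (ht' : t < T') (hs0 : 0 < s) (hs' : s < T')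
    (hts : |t - s| ≤ 1)
    (hmax : ∀ x' t' y' s', t' ∈ Icc 0 T' → s' ∈ Icc 0 T' →
      Phi u w e d η A T x' t' y' s' ≤ Phi u w e d η A T x t y s)
    (hj : uo (x, t) - wo (y, s) ≤ u (x, t) - w (y, s)) (hb : uo (x, t) - u (x, t) ≤ 2 * C) :
    False := by
  have evt : ∀ᶠ q : En n × ℝ in 𝓝 (x, t), q.2 ∈ Icc 0 T' :=
    (continuous_snd.tendsto (x, t)).eventually (Icc_mem_nhds ht ht')
  have evs : ∀ᶠ q : En n × ℝ in 𝓝 (y, s), q.2 ∈ Icc 0 T' :=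
    (continuous_snd.tendsto (y, s)).eventually (Icc_mem_nhds hs0 hs')
  have hm0 : 0 ≤ max (t - T) 0 := le_max_right _ _
  have h1 := hs x t ((2 * e) • (x - y)) (2 * d * (t - s) + η + 2 * A * max (t - T) 0)
    (e + d + A) ht (by
      filter_upwards [evt] with q hq
      have h := hmax q.1 q.2 y s hq ⟨hs0.le, hs'.le⟩
      unfold Phi at h
      rw [sq_expand x q.1 y] at h
      have h2 := mul_le_mul_of_nonneg_left (max_sq t q.2 T) hA
      rw [real_inner_smul_left]
      have : u (q.1, q.2) = u q := rfl
      rw [this] at h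
      have e1 : 0 ≤ (d + A) * ‖q.1 - x‖ ^ 2 := by positivity
      have e2 : 0 ≤ e * (q.2 - t) ^ 2 := by positivity
      nlinarith)
  have h2 := hS y s ((2 * e) • (x - y)) (2 * d * (t - s)) (-(e + d)) hs0 (by
      filter_upwards [evs] with q hq
      have h := hmax x t q.1 q.2 ⟨ht.le, ht'.le⟩ hq
      unfold Phi at h
      have h3 := sq_expand y q.1 x
      rw [norm_sub_rev x q.1, h3, norm_sub_rev y x] at h
      rw [real_inner_smul_left]
      have : w (q.1, q.2) = w q := rfl
      rw [this] at h
      have e1 : 0 ≤ d * ‖q.1 - y‖ ^ 2 := by positivity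
      have e2 : 0 ≤ e * (q.2 - s) ^ 2 := by positivity
      have e3 : inner ℝ (y - x) (q.1 - y) = - inner ℝ (x - y) (q.1 - y) := by
        rw [← inner_neg_left]; simp
      rw [e3] at h
      nlinarith)
  have hp : ‖(2 * e) • (x - y)‖ = ‖x - y‖ * (2 * e) := by
    rw [norm_smul, Real.norm_eq_abs, abs_of_pos (by positivity)]; ring
  have hA2 : 0 ≤ 2 * A * max (t - T) 0 := by positivity
  have h3 := hR x ((2 * e) • (x - y)) (by
    have := (abs_le.1 hts).1
    nlinarith)
  have h4 := hu x y _ h3 (hp ▸ h3)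
  have h5 := (abs_lt.1 h4).1
  linarith

theorem exmax {n : ℕ} {u w : En n × ℝ → ℝ}
    (huc : ContinuousOn u {q : En n × ℝ | 0 ≤ q.2}) (hwc : ContinuousOn w {q : En n × ℝ | 0 ≤ q.2})
    (hup : ZPeriodicST u) (hwp : ZPeriodicST w) {e d η A T T' C : ℝ} (he : 0 < e) (hd : 0 < d)
    (hη : 0 < η) (hA : 0 ≤ A) (hT : 0 ≤ T) (hT' : 0 ≤ T')
    (hub : ∀ x : En n, ∀ t ∈ Icc 0 T', |u (x, t)| ≤ C)
    (hwb : ∀ x : En n, ∀ t ∈ Icc 0 T', |w (x, t)| ≤ C) :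
    ∃ x t y s, t ∈ Icc 0 T' ∧ s ∈ Icc 0 T' ∧ ∀ x' t' y' s', t' ∈ Icc 0 T' → s' ∈ Icc 0 T' →
      Phi u w e d η A T x' t' y' s' ≤ Phi u w e d η A T x t y s := by
  have z0 : (0 : ℝ) ∈ Icc 0 T' := ⟨le_rfl, hT'⟩
  have hC : 0 ≤ C := (abs_nonneg _).trans (hub 0 0 z0)
  set r0 := Real.sqrt n with hr0
  have hr0' : 0 ≤ r0 := Real.sqrt_nonneg _
  set r1 := r0 + (4 * C / e + 1) with hr1
  have hr1' : 0 ≤ r1 := by positivity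
  have hK : IsCompact ((Metric.closedBall (0 : En n) r0 ×ˢ Icc (0 : ℝ) T') ×ˢ
      (Metric.closedBall (0 : En n) r1 ×ˢ Icc (0 : ℝ) T')) :=
    ((isCompact_closedBall _ _).prod isCompact_Icc).prod
      ((isCompact_closedBall _ _).prod isCompact_Icc)
  have hcont : ContinuousOn (fun q : (En n × ℝ) × (En n × ℝ) =>
      Phi u w e d η A T q.1.1 q.1.2 q.2.1 q.2.2)
      ((Metric.closedBall (0 : En n) r0 ×ˢ Icc (0 : ℝ) T') ×ˢ
      (Metric.closedBall (0 : En n) r1 ×ˢ Icc (0 : ℝ) T')) := by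
    unfold Phi
    refine ContinuousOn.sub (ContinuousOn.sub (ContinuousOn.sub (ContinuousOn.sub ?_ ?_) ?_) ?_) ?_
    · exact huc.comp (f := fun q : (En n × ℝ) × (En n × ℝ) => (q.1.1, q.1.2))
        (by fun_prop) (fun q hq => hq.1.2.1)
    · exact hwc.comp (f := fun q : (En n × ℝ) × (En n × ℝ) => (q.2.1, q.2.2))
        (by fun_prop) (fun q hq => hq.2.2.1)
    · fun_prop
    · fun_prop
    · fun_prop
  obtain ⟨⟨⟨x, t⟩, ⟨y, s⟩⟩, hm, hmax⟩ := hK.exists_isMaxOn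
    ⟨((0, 0), (0, 0)), ⟨⟨by simpa using hr0', z0⟩, ⟨by simpa using hr1', z0⟩⟩⟩ hcont
  refine ⟨x, t, y, s, hm.1.2, hm.2.2, ?_⟩
  intro x' t' y' s' ht' hs'
  by_cases hfar : ‖x' - y'‖ ≤ 4 * C / e + 1
  · obtain ⟨k, hk⟩ := exists_shift n x'
    have h1 : Phi u w e d η A T (x' + intVec n k) t' (y' + intVec n k) s' =
        Phi u w e d η A T x' t' y' s' := by
      unfold Phi
      rw [hup, hwp, add_sub_add_right_eq_sub]
    rw [← h1]
    have hmem : y' + intVec n k ∈ Metric.closedBall (0 : En n) r1 := by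
      rw [mem_closedBall_zero_iff]
      have : y' + intVec n k = (x' + intVec n k) - (x' - y') := by abel
      rw [this]
      have := norm_sub_le (x' + intVec n k) (x' - y')
      linarith
    exact hmax (a := ((x' + intVec n k, t'), (y' + intVec n k, s')))
      ⟨⟨by simpa using hk, ht'⟩, ⟨hmem, hs'⟩⟩
  · push Not at hfar
    have h0 : Phi u w e d η A T 0 0 0 0 ≤ Phi u w e d η A T x t y s :=
      hmax (a := ((0, 0), (0, 0))) ⟨⟨by simpa using hr0', z0⟩, ⟨by simpa using hr1', z0⟩⟩
    refine le_trans ?_ h0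
    have e1 : 4 * C < e * ‖x' - y'‖ ^ 2 := by
      have h2 : 0 ≤ 4 * C / e := by positivity
      have h3 : 4 * C / e < ‖x' - y'‖ ^ 2 := by nlinarith
      rwa [div_lt_iff₀' he] at h3
    have b1 := abs_le.1 (hub x' t' ht')
    have b2 := abs_le.1 (hwb y' s' hs')
    have b3 := abs_le.1 (hub 0 0 z0)
    have b4 := abs_le.1 (hwb 0 0 z0)
    have c1 : 0 ≤ d * (t' - s') ^ 2 := by positivity
    have c2 : 0 ≤ η * t' := mul_nonneg hη.le ht'.1
    have c3 : 0 ≤ A * (max (t' - T) 0) ^ 2 := by positivity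
    unfold Phi
    rw [max_eq_right (by linarith : (0 : ℝ) - T ≤ 0)]
    simp
    linarith

theorem comparison {n : ℕ} (H : Bool → En n → En n → ℝ)
    (hHc : ∀ i, Continuous fun q : En n × En n => H i q.1 q.2) (hHp : ∀ i, ZPeriodicH (H i))
    (hHco : ∀ i, Coercive (H i)) (u w : Bool → En n × ℝ → ℝ)
    (huc : ∀ i, ContinuousOn (u i) {q : En n × ℝ | 0 ≤ q.2})
    (hwc : ∀ i, ContinuousOn (w i) {q : En n × ℝ | 0 ≤ q.2})
    (hup : ∀ i, ZPeriodicST (u i)) (hwp : ∀ i, ZPeriodicST (w i))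
    (hu : ∀ i, JSub (H i) (u i) (u !i)) (hw : ∀ i, JSuper (H i) (w i) (w !i))
    (h0 : ∀ i x, u i (x, 0) ≤ w i (x, 0)) :
    ∀ i x t, 0 ≤ t → u i (x, t) ≤ w i (x, t) := by
  intro i₀ x₀ T hT
  by_contra hcon
  push Not at hcon
  obtain ⟨θ, hθ, hθ3⟩ : ∃ θ > 0, 3 * θ ≤ u i₀ (x₀, T) - w i₀ (x₀, T) :=
    ⟨(u i₀ (x₀, T) - w i₀ (x₀, T)) / 3, by linarith, by linarith⟩
  set T' := T + 2 with hT'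
  have hIcc : (univ : Set (En n)) ×ˢ Icc (0 : ℝ) T' ⊆ {q : En n × ℝ | 0 ≤ q.2} :=
    fun q hq => hq.2.1
  have B1 := fun i => per_bdd (fun x t => u i (x, t)) (Icc (0 : ℝ) T') isCompact_Icc
    ((huc i).mono hIcc) (fun x k a => hup i x k a)
  have B2 := fun i => per_bdd (fun x t => w i (x, t)) (Icc (0 : ℝ) T') isCompact_Icc
    ((hwc i).mono hIcc) (fun x k a => hwp i x k a)
  have U1 := fun i => per_unif (fun x t => u i (x, t)) (Icc (0 : ℝ) T') isCompact_Icc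
    ((huc i).mono hIcc) (fun x k a => hup i x k a) θ hθ
  have U2 := fun i => per_unif (fun x t => w i (x, t)) (Icc (0 : ℝ) T') isCompact_Icc
    ((hwc i).mono hIcc) (fun x k a => hwp i x k a) θ hθ
  choose C1 hC1 hB1 using B1
  choose C2 hC2 hB2 using B2
  choose r1 hr1 hU1 using U1
  choose r2 hr2 hU2 using U2
  obtain ⟨C, hC, hCu, hCw⟩ : ∃ C : ℝ, 0 ≤ C ∧ (∀ i, ∀ x, ∀ t ∈ Icc 0 T', |u i (x, t)| ≤ C) ∧
      (∀ i, ∀ x, ∀ t ∈ Icc 0 T', |w i (x, t)| ≤ C) := by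
    have a1 := hC1 true
    have a2 := hC1 false
    have a3 := hC2 true
    have a4 := hC2 false
    refine ⟨C1 true + C1 false + C2 true + C2 false, by positivity, ?_, ?_⟩
    · intro i x t ht
      refine (hB1 i x t ht).trans ?_
      cases i <;> linarith
    · intro i x t ht
      refine (hB2 i x t ht).trans ?_
      cases i <;> linarith
  obtain ⟨ρ, hρ, hρ1, hρu, hρw⟩ : ∃ ρ > 0, ρ ≤ 1 ∧ (∀ i, ρ ≤ r1 i) ∧ ∀ i, ρ ≤ r2 i := by
    have a1 := hr1 true
    have a2 := hr1 false
    have a3 := hr2 true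
    have a4 := hr2 false
    refine ⟨min (min (min (r1 true) (r1 false)) (min (r2 true) (r2 false))) 1,
      by positivity, min_le_right _ _, ?_, ?_⟩
    · intro i; cases i <;> simp
    · intro i; cases i <;> simp
  obtain ⟨d, hd, hdρ⟩ : ∃ d > 0, 2 * C < d * ρ ^ 2 := by
    refine ⟨(2 * C + 1) / ρ ^ 2, by positivity, ?_⟩
    rw [div_mul_cancel₀ _ (by positivity)]
    linarith
  obtain ⟨η, hη, hηT⟩ : ∃ η > 0, η * T ≤ θ := by
    refine ⟨θ / (T + 1), by positivity, ?_⟩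
    rw [div_mul_eq_mul_div, div_le_iff₀ (by positivity)]
    nlinarith
  obtain ⟨R, hR0, hR⟩ : ∃ R : ℝ, 0 < R ∧ ∀ i x p, H i x p ≤ 2 * d + 2 * C → ‖p‖ ≤ R := by
    choose r hr using fun i => hHco i (2 * d + 2 * C + 1)
    refine ⟨max (max (r true) (r false)) 1, by positivity, ?_⟩
    intro i x p hp
    by_contra hcc
    push Not at hcc
    have : r i ≤ ‖p‖ := by
      refine le_trans ?_ hcc.le
      cases i <;> simp
    have := hr i x p this
    linarith
  obtain ⟨σ, hσ, hHu⟩ : ∃ σ > 0, ∀ i x y p, ‖p‖ ≤ R → ‖x - y‖ < σ → |H i x p - H i y p| < η := by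
    choose r hr0 hr using fun i => per_unif (H i) (Metric.closedBall (0 : En n) R)
      (isCompact_closedBall _ _) (hHc i).continuousOn (fun x k a => hHp i x k a) η hη
    have a1 := hr0 true
    have a2 := hr0 false
    refine ⟨min (r true) (r false), by positivity, ?_⟩
    intro i x y p hp hxy
    have hi : ‖x - y‖ < r i := by
      refine lt_of_lt_of_le hxy ?_
      cases i <;> simp
    exact hr i x y p (by simpa using hp) p (by simpa using hp) (by rwa [dist_eq_norm])
      (by simpa using hr0 i)
  obtain ⟨e, he, heρ, heσ⟩ : ∃ e > 0, 2 * C < e * ρ ^ 2 ∧ R < σ * (2 * e) := by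
    refine ⟨(2 * C + 1) / ρ ^ 2 + R / σ, by positivity, ?_, ?_⟩
    · rw [add_mul, div_mul_cancel₀ _ (by positivity)]
      have : 0 ≤ R / σ * ρ ^ 2 := by positivity
      linarith
    · have e1 : σ * (2 * ((2 * C + 1) / ρ ^ 2 + R / σ)) = σ * (2 * ((2 * C + 1) / ρ ^ 2)) + 2 * R := by
        field_simp
      rw [e1]
      have : 0 ≤ σ * (2 * ((2 * C + 1) / ρ ^ 2)) := by positivity
      linarith
  have hA : (0 : ℝ) ≤ 2 * C + 1 := by linarith
  obtain ⟨i, x, t, y, s, ht, hs, hmax⟩ : ∃ i x t y s, t ∈ Icc 0 T' ∧ s ∈ Icc 0 T' ∧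
      ∀ j x' t' y' s', t' ∈ Icc 0 T' → s' ∈ Icc 0 T' →
      Phi (u j) (w j) e d η (2 * C + 1) T x' t' y' s' ≤
        Phi (u i) (w i) e d η (2 * C + 1) T x t y s := by
    choose x t y s ht hs hm using fun i => exmax (huc i) (hwc i) (hup i) (hwp i) (T := T) he hd hη hA
      hT (by linarith : 0 ≤ T') (hCu i) (hCw i)
    rcases le_total (Phi (u true) (w true) e d η (2 * C + 1) T (x true) (t true) (y true) (s true))
      (Phi (u false) (w false) e d η (2 * C + 1) T (x false) (t false) (y false) (s false))
      with hle | hle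
    · refine ⟨false, x false, t false, y false, s false, ht _, hs _, ?_⟩
      intro j x' t' y' s' ht' hs'
      cases j
      · exact hm _ _ _ _ _ ht' hs'
      · exact (hm _ _ _ _ _ ht' hs').trans hle
    · refine ⟨true, x true, t true, y true, s true, ht _, hs _, ?_⟩
      intro j x' t' y' s' ht' hs'
      cases j
      · exact (hm _ _ _ _ _ ht' hs').trans hle
      · exact hm _ _ _ _ _ ht' hs'
  have hTm : T ∈ Icc 0 T' := ⟨hT, by linarith⟩
  have hval : 2 * θ ≤ Phi (u i) (w i) e d η (2 * C + 1) T x t y s := by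
    refine le_trans ?_ (hmax i₀ x₀ T x₀ T hTm hTm)
    unfold Phi
    simp
    linarith
  have b1 := abs_le.1 (hCu i x t ht)
  have b2 := abs_le.1 (hCw i y s hs)
  have b3 := abs_le.1 (hCu (!i) x t ht)
  have hj := hmax (!i) x t y s ht hs
  unfold Phi at hval hj
  have c1 : 0 ≤ e * ‖x - y‖ ^ 2 := by positivity
  have c2 : 0 ≤ d * (t - s) ^ 2 := by positivity
  have c3 : 0 ≤ η * t := mul_nonneg hη.le ht.1
  have c4 : 0 ≤ (2 * C + 1) * (max (t - T) 0) ^ 2 := by positivity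
  have hxy : ‖x - y‖ < ρ := by
    have : e * ‖x - y‖ ^ 2 < e * ρ ^ 2 := by linarith
    have := lt_of_mul_lt_mul_left this he.le
    exact lt_of_pow_lt_pow_left₀ 2 hρ.le this
  have hts : |t - s| < ρ := by
    have : d * (t - s) ^ 2 < d * ρ ^ 2 := by linarith
    have := lt_of_mul_lt_mul_left this hd.le
    exact abs_lt_of_sq_lt_sq this hρ.le
  have htT : t < T + 1 := by
    by_contra hcc
    push Not at hcc
    have h1 : 1 ≤ max (t - T) 0 := le_trans (by linarith) (le_max_left _ _)
    have : 1 ≤ (max (t - T) 0) ^ 2 := one_le_pow₀ h1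
    nlinarith
  have hts1 := abs_lt.1 hts
  have ht0 : 0 < t := by
    rcases ht.1.lt_or_eq with h | h
    · exact h
    · exfalso
      have h1 := hU2 i x y t ht s hs (by rw [dist_eq_norm]; linarith [hρw i])
        (by rw [Real.dist_eq]; linarith [hρw i])
      have h2 := (abs_lt.1 h1).2
      have h3 := h0 i x
      rw [h] at h3
      linarith
  have hs0 : 0 < s := by
    rcases hs.1.lt_or_eq with h | h
    · exact h
    · exfalso
      have h1 := hU1 i x y t ht s hs (by rw [dist_eq_norm]; linarith [hρu i])
        (by rw [Real.dist_eq]; linarith [hρu i])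
      have h2 := (abs_lt.1 h1).2
      have h3 := h0 i y
      rw [h] at h3
      linarith
  refine core (hu i) (hw i) (T := T) (T' := T') (C := C) (R := R) he hd hη hA (hR i) ?_ ht0 (by linarith)
    hs0 (by linarith) (by linarith) (hmax i) (by linarith) (by linarith)
  intro x y p hp hxy
  refine hHu i x y p hp ?_
  have : ‖x - y‖ * (2 * e) < σ * (2 * e) := by linarith
  exact lt_of_mul_lt_mul_right this (by positivity)

theorem space_lip {n : ℕ} {H : En n → En n → ℝ} {u uo : En n × ℝ → ℝ} (hs : JSub H u uo)
    (huc : ContinuousOn u {q : En n × ℝ | 0 ≤ q.2}) {L D K : ℝ} (hL : 0 ≤ L) (hK : 0 < K)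
    (hbd : ∀ T, ∃ M, ∀ x t, 0 ≤ t → t ≤ T → |u (x, t)| ≤ M)
    (hlip : ∀ x t s, 0 ≤ t → 0 ≤ s → |u (x, t) - u (x, s)| ≤ L * |t - s|)
    (hD : ∀ x t, 0 ≤ t → uo (x, t) - u (x, t) ≤ D)
    (hco : ∀ x p, K ≤ ‖p‖ → L + D < H x p) (x₀ z : En n) (t₀ : ℝ) (ht₀ : 0 < t₀) :
    u (z, t₀) - u (x₀, t₀) ≤ K * ‖z - x₀‖ := by
  by_contra hcon
  push Not at hcon
  obtain ⟨θ, hθ, hθ'⟩ : ∃ θ > 0, θ ≤ u (z, t₀) - u (x₀, t₀) - K * ‖z - x₀‖ :=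
    ⟨u (z, t₀) - u (x₀, t₀) - K * ‖z - x₀‖, by linarith, le_rfl⟩
  obtain ⟨M, hM⟩ := hbd (2 * t₀)
  have hM0 : 0 ≤ M := (abs_nonneg _).trans (hM x₀ t₀ ht₀.le (by linarith))
  obtain ⟨N, hN0, hN1, hN2⟩ : ∃ N > 0, 2 * M < N * t₀ ^ 2 ∧ L ^ 2 < N * θ := by
    refine ⟨(2 * M + 1) / t₀ ^ 2 + (L ^ 2 + 1) / θ, by positivity, ?_, ?_⟩
    · rw [add_mul, div_mul_cancel₀ _ (by positivity)]
      have : 0 ≤ (L ^ 2 + 1) / θ * t₀ ^ 2 := by positivity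
      linarith
    · rw [add_mul, div_mul_cancel₀ _ (by positivity)]
      have : 0 ≤ (2 * M + 1) / t₀ ^ 2 * θ := by positivity
      linarith
  obtain ⟨r, hr0, hr⟩ : ∃ r > 0, 2 * M < K * r ∧ ‖z - x₀‖ ≤ r := by
    refine ⟨(2 * M + 1) / K + ‖z - x₀‖, by positivity, ?_, ?_⟩
    · rw [mul_add, mul_div_cancel₀ _ hK.ne']
      have : 0 ≤ K * ‖z - x₀‖ := by positivity
      linarith
    · have : 0 ≤ (2 * M + 1) / K := by positivity
      linarith
  have hKc : IsCompact (Metric.closedBall x₀ r ×ˢ Icc (0 : ℝ) (2 * t₀)) :=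
    (isCompact_closedBall _ _).prod isCompact_Icc
  have hcont : ContinuousOn (fun q : En n × ℝ => u q - K * ‖q.1 - x₀‖ - N * (q.2 - t₀) ^ 2)
      (Metric.closedBall x₀ r ×ˢ Icc (0 : ℝ) (2 * t₀)) := by
    refine ContinuousOn.sub (ContinuousOn.sub (huc.mono fun q hq => hq.2.1) ?_) ?_ <;> fun_prop
  have hzmem : (z, t₀) ∈ Metric.closedBall x₀ r ×ˢ Icc (0 : ℝ) (2 * t₀) :=
    ⟨by rw [Metric.mem_closedBall, dist_eq_norm]; exact hr.2, ⟨ht₀.le, by linarith⟩⟩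
  obtain ⟨⟨x, t⟩, hm, hmax⟩ := hKc.exists_isMaxOn ⟨_, hzmem⟩ hcont
  have hm2 : t ∈ Icc (0 : ℝ) (2 * t₀) := hm.2
  have hz : u (x₀, t₀) + θ ≤ u (x, t) - K * ‖x - x₀‖ - N * (t - t₀) ^ 2 := by
    have := hmax hzmem
    simp at this
    linarith
  have b1 := abs_le.1 (hM x t hm2.1 hm2.2)
  have b2 := abs_le.1 (hM x₀ t₀ ht₀.le (by linarith))
  have c1 : 0 ≤ K * ‖x - x₀‖ := by positivity
  have c2 : 0 ≤ N * (t - t₀) ^ 2 := by positivity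
  have hxr : ‖x - x₀‖ < r := by
    have : K * ‖x - x₀‖ < K * r := by linarith
    exact lt_of_mul_lt_mul_left this hK.le
  have htt : |t - t₀| < t₀ := by
    have : N * (t - t₀) ^ 2 < N * t₀ ^ 2 := by linarith
    exact abs_lt_of_sq_lt_sq (lt_of_mul_lt_mul_left this hN0.le) ht₀.le
  have htt' := abs_lt.1 htt
  have ht0 : 0 < t := by linarith
  have hne : 0 < ‖x - x₀‖ := by
    rw [norm_pos_iff]
    intro h
    have hx : x = x₀ := sub_eq_zero.1 h
    rw [hx] at hz
    have h1 := (le_abs_self _).trans (hlip x₀ t t₀ ht0.le ht₀.le)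
    simp at hz
    have h2 := sq_abs (t - t₀)
    rw [← h2] at hz
    have h3 : N * θ + (N * |t - t₀|) ^ 2 ≤ L * (N * |t - t₀|) := by nlinarith
    nlinarith [sq_nonneg (L - 2 * (N * |t - t₀|))]
  set a := ‖x - x₀‖ with ha
  have ev : ∀ᶠ q in 𝓝 (x, t), u q ≤ u (x, t) + (inner ℝ ((K / a) • (x - x₀)) (q.1 - x)
      + (2 * N * (t - t₀)) * (q.2 - t)
      + (K / (2 * a) + N) * (‖q.1 - x‖ ^ 2 + (q.2 - t) ^ 2)) := by
    have e1 : ∀ᶠ q : En n × ℝ in 𝓝 (x, t), q.2 ∈ Icc 0 (2 * t₀) :=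
      (continuous_snd.tendsto (x, t)).eventually (Icc_mem_nhds ht0 (by linarith))
    have e2 : ∀ᶠ q : En n × ℝ in 𝓝 (x, t), q.1 ∈ Metric.closedBall x₀ r :=
      (continuous_fst.tendsto (x, t)).eventually
        (Metric.closedBall_mem_nhds_of_mem (by rw [Metric.mem_ball, dist_eq_norm]; exact hxr))
    filter_upwards [e1, e2] with q h1 h2
    have h3 : u q - K * ‖q.1 - x₀‖ - N * (q.2 - t₀) ^ 2 ≤ u (x, t) - K * a - N * (t - t₀) ^ 2 :=
      hmax (a := q) ⟨h2, h1⟩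
    have h4 := sq_expand x q.1 x₀
    rw [← ha] at h4
    rw [real_inner_smul_left]
    have h5 : K * ‖q.1 - x₀‖ ≤ K / (2 * a) * (‖q.1 - x₀‖ ^ 2 + a ^ 2) := by
      rw [div_mul_eq_mul_div, le_div_iff₀ (by positivity)]
      nlinarith [mul_nonneg hK.le (sq_nonneg (‖q.1 - x₀‖ - a))]
    rw [h4] at h5
    have h6 : K / (2 * a) * (a ^ 2 + 2 * inner ℝ (x - x₀) (q.1 - x) + ‖q.1 - x‖ ^ 2 + a ^ 2)
      = K * a + K / a * inner ℝ (x - x₀) (q.1 - x) + K / (2 * a) * ‖q.1 - x‖ ^ 2 := by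
      field_simp
      ring
    rw [h6] at h5
    have c3 : 0 ≤ K / (2 * a) * (q.2 - t) ^ 2 := by positivity
    have c4 : 0 ≤ N * ‖q.1 - x‖ ^ 2 := by positivity
    nlinarith
  have hjet := hs x t _ _ _ ht0 ev
  have hslope : -L - 2 * N * (t - t₀) ≤ 0 := by
    apply one_dim (β := K / (2 * a) + N)
    filter_upwards [ev_line ev 0 1] with τ h1 h2
    simp at h1
    have h3 := (abs_le.1 (hlip x (t + τ) t (by linarith) ht0.le)).1
    rw [add_sub_cancel_left, abs_of_pos h2] at h3
    nlinarith
  have hp := hco x ((K / a) • (x - x₀)) (by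
    rw [norm_smul, Real.norm_eq_abs, abs_of_pos (by positivity), ← ha,
      div_mul_cancel₀ _ hne.ne'])
  have := hD x t ht0.le
  linarith

/-- Lipschitz regularity of solutions of (C). -/
theorem stmt3 (n : ℕ) (hn : 1 ≤ n) (H₁ H₂ : En n → En n → ℝ)
    (hH₁cont : Continuous fun q : En n × En n => H₁ q.1 q.2)
    (hH₂cont : Continuous fun q : En n × En n => H₂ q.1 q.2)
    (hH₁per : ZPeriodicH H₁) (hH₂per : ZPeriodicH H₂)
    (hH₁coer : Coercive H₁) (hH₂coer : Coercive H₂)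
    (u₀₁ u₀₂ : En n → ℝ) (hu₀₁ : IsLip u₀₁) (hu₀₂ : IsLip u₀₂)
    (hu₀₁per : ZPeriodic u₀₁) (hu₀₂per : ZPeriodic u₀₂)
    (u₁ u₂ : En n × ℝ → ℝ) (hu₁per : ZPeriodicST u₁) (hu₂per : ZPeriodicST u₂)
    (hsol : SysSolution H₁ H₂ u₀₁ u₀₂ u₁ u₂)
    (c : ℝ) (v₁ v₂ : En n → ℝ) (hv₁per : ZPeriodic v₁) (hv₂per : ZPeriodic v₂)
    (herg : ErgSolution H₁ H₂ v₁ v₂ c) :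
    (∃ C : ℝ, ∀ (x : En n) (t : ℝ), 0 ≤ t →
      |u₁ (x, t) + c * t| ≤ C ∧ |u₂ (x, t) + c * t| ≤ C) ∧
    (∃ K : NNReal, LipschitzOnWith K (fun q : En n × ℝ => u₁ q + c * q.2)
        {q : En n × ℝ | 0 ≤ q.2} ∧
      LipschitzOnWith K (fun q : En n × ℝ => u₂ q + c * q.2) {q : En n × ℝ | 0 ≤ q.2}) := by
  obtain ⟨huc₁, huc₂, ⟨hsub₁, hsub₂⟩, ⟨hsup₁, hsup₂⟩, hi₁, hi₂⟩ := hsol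
  obtain ⟨hvc₁, hvc₂, ⟨hvsub₁, hvsub₂⟩, ⟨hvsup₁, hvsup₂⟩⟩ := herg
  obtain ⟨K₁, hK₁⟩ := hu₀₁
  obtain ⟨K₂, hK₂⟩ := hu₀₂
  have ju₁ := JSub_of_evol hsub₁
  have ju₂ := JSub_of_evol hsub₂
  have jU₁ := JSuper_of_evol hsup₁
  have jU₂ := JSuper_of_evol hsup₂
  -- specialised comparison
  have cmp : ∀ (f₁ f₂ g₁ g₂ : En n × ℝ → ℝ),
      ContinuousOn f₁ {q : En n × ℝ | 0 ≤ q.2} → ContinuousOn f₂ {q : En n × ℝ | 0 ≤ q.2} →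
      ContinuousOn g₁ {q : En n × ℝ | 0 ≤ q.2} → ContinuousOn g₂ {q : En n × ℝ | 0 ≤ q.2} →
      ZPeriodicST f₁ → ZPeriodicST f₂ → ZPeriodicST g₁ → ZPeriodicST g₂ →
      JSub H₁ f₁ f₂ → JSub H₂ f₂ f₁ → JSuper H₁ g₁ g₂ → JSuper H₂ g₂ g₁ →
      (∀ x, f₁ (x, 0) ≤ g₁ (x, 0)) → (∀ x, f₂ (x, 0) ≤ g₂ (x, 0)) →
      ∀ x t, 0 ≤ t → f₁ (x, t) ≤ g₁ (x, t) ∧ f₂ (x, t) ≤ g₂ (x, t) := by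
    intro f₁ f₂ g₁ g₂ a1 a2 a3 a4 a5 a6 a7 a8 a9 a10 a11 a12 a13 a14 x t ht
    have := comparison (fun i => cond i H₁ H₂) (by intro i; cases i <;> assumption)
      (by intro i; cases i <;> assumption) (by intro i; cases i <;> assumption)
      (fun i => cond i f₁ f₂) (fun i => cond i g₁ g₂)
      (by intro i; cases i <;> assumption) (by intro i; cases i <;> assumption)
      (by intro i; cases i <;> assumption) (by intro i; cases i <;> assumption)
      (by intro i; cases i <;> assumption) (by intro i; cases i <;> assumption)
      (by intro i; cases i <;> assumption)
    exact ⟨this true x t ht, this false x t ht⟩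
  -- bounds for periodic continuous functions on space
  have bdd : ∀ f : En n → ℝ, Continuous f → ZPeriodic f → ∃ C : ℝ, 0 ≤ C ∧ ∀ x, |f x| ≤ C := by
    intro f hf hp
    obtain ⟨C, hC, h⟩ := per_bdd (fun x (_ : ℝ) => f x) {0} isCompact_singleton
      (by fun_prop) (fun x k _ => hp x k)
    exact ⟨C, hC, fun x => h x 0 rfl⟩
  obtain ⟨A₁, hA₁, hA₁'⟩ := bdd _ hK₁.continuous hu₀₁per
  obtain ⟨A₂, hA₂, hA₂'⟩ := bdd _ hK₂.continuous hu₀₂per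
  obtain ⟨B₁, hB₁, hB₁'⟩ := bdd _ hvc₁ hv₁per
  obtain ⟨B₂, hB₂, hB₂'⟩ := bdd _ hvc₂ hv₂per
  set M := A₁ + A₂ + B₁ + B₂ with hM
  have pv : ∀ (f : En n → ℝ) (m b : ℝ), ZPeriodic f → ZPeriodicST (fun q => f q.1 + m * q.2 + b) := by
    intro f m b hf x k t
    simp only [hf x k]
  have pv' : ∀ (f : En n → ℝ) (m b : ℝ), ZPeriodic f → ZPeriodicST (fun q => f q.1 - m * q.2 + b) := by
    intro f m b hf x k t
    simp only [hf x k]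
  have up := cmp u₁ u₂ (fun q => v₁ q.1 - c * q.2 + M) (fun q => v₂ q.1 - c * q.2 + M) huc₁ huc₂
    (by fun_prop) (by fun_prop) hu₁per hu₂per (pv' _ _ _ hv₁per) (pv' _ _ _ hv₂per)
    ju₁ ju₂ (JSuper_of_stat hvsup₁ M) (JSuper_of_stat hvsup₂ M)
    (fun x => by
      have := abs_le.1 (hA₁' x); have := abs_le.1 (hB₁' x)
      simp only [hi₁]; linarith)
    (fun x => by
      have := abs_le.1 (hA₂' x); have := abs_le.1 (hB₂' x)
      simp only [hi₂]; linarith)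
  have dn := cmp (fun q => v₁ q.1 - c * q.2 + (-M)) (fun q => v₂ q.1 - c * q.2 + (-M)) u₁ u₂
    (by fun_prop) (by fun_prop) huc₁ huc₂ (pv' _ _ _ hv₁per) (pv' _ _ _ hv₂per) hu₁per hu₂per
    (JSub_of_stat hvsub₁ (-M)) (JSub_of_stat hvsub₂ (-M)) jU₁ jU₂
    (fun x => by
      have := abs_le.1 (hA₁' x); have := abs_le.1 (hB₁' x)
      simp only [hi₁]; linarith)
    (fun x => by
      have := abs_le.1 (hA₂' x); have := abs_le.1 (hB₂' x)
      simp only [hi₂]; linarith)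
  have hbound : ∀ (x : En n) (t : ℝ), 0 ≤ t →
      |u₁ (x, t) + c * t| ≤ 2 * M ∧ |u₂ (x, t) + c * t| ≤ 2 * M := by
    intro x t ht
    have h1 := up x t ht
    have h2 := dn x t ht
    simp only at h1 h2
    have := abs_le.1 (hB₁' x)
    have := abs_le.1 (hB₂' x)
    constructor <;> rw [abs_le] <;> constructor <;> linarith
  refine ⟨⟨2 * M, hbound⟩, ?_⟩
  -- time Lipschitz
  obtain ⟨h₁, hh₁, hh₁'⟩ := per_bdd H₁ (Metric.closedBall (0 : En n) K₁) (isCompact_closedBall _ _)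
    hH₁cont.continuousOn (fun x k a => hH₁per x k a)
  obtain ⟨h₂, hh₂, hh₂'⟩ := per_bdd H₂ (Metric.closedBall (0 : En n) K₂) (isCompact_closedBall _ _)
    hH₂cont.continuousOn (fun x k a => hH₂per x k a)
  set L := h₁ + h₂ + A₁ + A₂ with hL
  have hL0 : 0 ≤ L := by positivity
  have k₁ : ∀ x p : En n, ‖p‖ ≤ K₁ → |H₁ x p + u₀₁ x - u₀₂ x| ≤ L := by
    intro x p hp
    have := abs_le.1 (hh₁' x p (by simpa using hp))
    have := abs_le.1 (hA₁' x)
    have := abs_le.1 (hA₂' x)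
    rw [abs_le]; constructor <;> linarith
  have k₂ : ∀ x p : En n, ‖p‖ ≤ K₂ → |H₂ x p + u₀₂ x - u₀₁ x| ≤ L := by
    intro x p hp
    have := abs_le.1 (hh₂' x p (by simpa using hp))
    have := abs_le.1 (hA₁' x)
    have := abs_le.1 (hA₂' x)
    rw [abs_le]; constructor <;> linarith
  have c₁ := hK₁.continuous
  have c₂ := hK₂.continuous
  have iu := cmp u₁ u₂ (fun q => u₀₁ q.1 + L * q.2) (fun q => u₀₂ q.1 + L * q.2) huc₁ huc₂
    (by fun_prop) (by fun_prop) hu₁per hu₂per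
    (by simpa using pv u₀₁ L 0 hu₀₁per) (by simpa using pv u₀₂ L 0 hu₀₂per) ju₁ ju₂
    (JSuper_of_lip hK₁ L fun x p hp => (abs_le.1 (k₁ x p hp)).1)
    (JSuper_of_lip hK₂ L fun x p hp => (abs_le.1 (k₂ x p hp)).1)
    (fun x => by simp [hi₁]) (fun x => by simp [hi₂])
  have il := cmp (fun q => u₀₁ q.1 - L * q.2) (fun q => u₀₂ q.1 - L * q.2) u₁ u₂
    (by fun_prop) (by fun_prop) huc₁ huc₂
    (by simpa using pv' u₀₁ L 0 hu₀₁per) (by simpa using pv' u₀₂ L 0 hu₀₂per) hu₁per hu₂per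
    (JSub_of_lip hK₁ L fun x p hp => (abs_le.1 (k₁ x p hp)).2)
    (JSub_of_lip hK₂ L fun x p hp => (abs_le.1 (k₂ x p hp)).2) jU₁ jU₂
    (fun x => by simp [hi₁]) (fun x => by simp [hi₂])
  have sc : ∀ (f : En n × ℝ → ℝ) (τ m : ℝ), 0 ≤ τ → ContinuousOn f {q : En n × ℝ | 0 ≤ q.2} →
      ContinuousOn (fun q : En n × ℝ => f (q.1, q.2 + τ) + m) {q : En n × ℝ | 0 ≤ q.2} := by
    intro f τ m hτ hf
    refine ContinuousOn.add ?_ continuousOn_const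
    exact hf.comp (f := fun q : En n × ℝ => (q.1, q.2 + τ)) (by fun_prop)
      (fun q hq => add_nonneg (by exact hq) hτ)
  have sp : ∀ (f : En n × ℝ → ℝ) (τ m : ℝ), ZPeriodicST f →
      ZPeriodicST (fun q : En n × ℝ => f (q.1, q.2 + τ) + m) := by
    intro f τ m hf x k t
    simp only [hf x k]
  have sh : ∀ τ, 0 ≤ τ → ∀ x t, 0 ≤ t → |u₁ (x, t + τ) - u₁ (x, t)| ≤ L * τ ∧
      |u₂ (x, t + τ) - u₂ (x, t)| ≤ L * τ := by
    intro τ hτ x t ht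
    have a := cmp u₁ u₂ (fun q => u₁ (q.1, q.2 + τ) + L * τ) (fun q => u₂ (q.1, q.2 + τ) + L * τ)
      huc₁ huc₂ (sc _ _ _ hτ huc₁) (sc _ _ _ hτ huc₂) hu₁per hu₂per (sp _ _ _ hu₁per)
      (sp _ _ _ hu₂per) ju₁ ju₂ (JSuper_shift jU₁ τ _ hτ) (JSuper_shift jU₂ τ _ hτ)
      (fun x => by
        have := (il x τ hτ).1
        simp only [hi₁, zero_add] at this ⊢; linarith)
      (fun x => by
        have := (il x τ hτ).2
        simp only [hi₂, zero_add] at this ⊢; linarith) x t ht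
    have b := cmp (fun q => u₁ (q.1, q.2 + τ) + (-(L * τ))) (fun q => u₂ (q.1, q.2 + τ) + (-(L * τ)))
      u₁ u₂ (sc _ _ _ hτ huc₁) (sc _ _ _ hτ huc₂) huc₁ huc₂ (sp _ _ _ hu₁per)
      (sp _ _ _ hu₂per) hu₁per hu₂per (JSub_shift ju₁ τ _ hτ) (JSub_shift ju₂ τ _ hτ) jU₁ jU₂
      (fun x => by
        have := (iu x τ hτ).1
        simp only [hi₁, zero_add] at this ⊢; linarith)
      (fun x => by
        have := (iu x τ hτ).2
        simp only [hi₂, zero_add] at this ⊢; linarith) x t ht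
    simp only at a b
    constructor <;> rw [abs_le] <;> constructor <;> linarith
  have tl : ∀ x t s, 0 ≤ t → 0 ≤ s → |u₁ (x, t) - u₁ (x, s)| ≤ L * |t - s| ∧
      |u₂ (x, t) - u₂ (x, s)| ≤ L * |t - s| := by
    intro x t s ht hs
    rcases le_total s t with h | h
    · have := sh (t - s) (by linarith) x s hs
      rw [add_sub_cancel] at this
      rwa [abs_of_nonneg (by linarith : 0 ≤ t - s)]
    · have := sh (s - t) (by linarith) x t ht
      rw [add_sub_cancel] at this
      rw [abs_sub_comm t s, abs_of_nonneg (by linarith : 0 ≤ s - t), abs_sub_comm (u₁ (x, t)),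
        abs_sub_comm (u₂ (x, t))]
      exact this
  -- space Lipschitz
  obtain ⟨r₁, hr₁⟩ := hH₁coer (L + 4 * M + 1)
  obtain ⟨r₂, hr₂⟩ := hH₂coer (L + 4 * M + 1)
  set K := max (max r₁ r₂) (K₁ + K₂ + 1 : ℝ) with hKdef
  have hK12 : (K₁ + K₂ + 1 : ℝ) ≤ K := le_max_right _ _
  have hK1n : (0 : ℝ) ≤ K₁ := K₁.2
  have hK2n : (0 : ℝ) ≤ K₂ := K₂.2
  have hKpos : 0 < K := by linarith
  have hKr₁ : r₁ ≤ K := (le_max_left _ _).trans (le_max_left _ _)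
  have hKr₂ : r₂ ≤ K := (le_max_right _ _).trans (le_max_left _ _)
  have bd : ∀ f : En n × ℝ → ℝ, (∀ x t, 0 ≤ t → |f (x, t) + c * t| ≤ 2 * M) →
      ∀ T, ∃ M', ∀ x t, 0 ≤ t → t ≤ T → |f (x, t)| ≤ M' := by
    intro f hf T
    refine ⟨2 * M + |c| * T, ?_⟩
    intro x t ht htT
    have h1 := hf x t ht
    have h2 : |c * t| ≤ |c| * T := by
      rw [abs_mul, abs_of_nonneg ht]
      gcongr
    have h3 : f (x, t) = (f (x, t) + c * t) - c * t := by ring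
    rw [h3]
    exact (abs_sub _ _).trans (add_le_add h1 h2)
  have sl₁ : ∀ x z t, 0 ≤ t → u₁ (z, t) - u₁ (x, t) ≤ K * ‖z - x‖ := by
    intro x z t ht
    rcases ht.lt_or_eq with h | h
    · refine space_lip ju₁ huc₁ hL0 hKpos (bd u₁ fun x t ht => (hbound x t ht).1)
        (fun x t s ht hs => (tl x t s ht hs).1) (D := 4 * M) ?_ ?_ x z t h
      · intro x t ht
        have h1 := abs_le.1 (hbound x t ht).1
        have h2 := abs_le.1 (hbound x t ht).2
        linarith
      · intro x p hp
        have := hr₁ x p (hKr₁.trans hp)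
        linarith
    · rw [← h, hi₁, hi₁]
      have h1 := (le_abs_self _).trans (hK₁.dist_le_mul z x)
      rw [dist_eq_norm] at h1
      refine h1.trans ?_
      gcongr
      linarith
  have sl₂ : ∀ x z t, 0 ≤ t → u₂ (z, t) - u₂ (x, t) ≤ K * ‖z - x‖ := by
    intro x z t ht
    rcases ht.lt_or_eq with h | h
    · refine space_lip ju₂ huc₂ hL0 hKpos (bd u₂ fun x t ht => (hbound x t ht).2)
        (fun x t s ht hs => (tl x t s ht hs).2) (D := 4 * M) ?_ ?_ x z t h
      · intro x t ht
        have h1 := abs_le.1 (hbound x t ht).1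
        have h2 := abs_le.1 (hbound x t ht).2
        linarith
      · intro x p hp
        have := hr₂ x p (hKr₂.trans hp)
        linarith
    · rw [← h, hi₂, hi₂]
      have h1 := (le_abs_self _).trans (hK₂.dist_le_mul z x)
      rw [dist_eq_norm] at h1
      refine h1.trans ?_
      gcongr
      linarith
  have fin : ∀ f : En n × ℝ → ℝ, (∀ x z t, 0 ≤ t → f (z, t) - f (x, t) ≤ K * ‖z - x‖) →
      (∀ x t s, 0 ≤ t → 0 ≤ s → |f (x, t) - f (x, s)| ≤ L * |t - s|) →
      LipschitzOnWith (Real.toNNReal (K + L + |c|)) (fun q : En n × ℝ => f q + c * q.2)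
        {q : En n × ℝ | 0 ≤ q.2} := by
    intro f hx ht
    apply LipschitzOnWith.of_le_add_mul
    rintro ⟨x, t⟩ h1 ⟨y, s⟩ h2
    simp only [mem_setOf_eq] at h1 h2
    rw [Real.coe_toNNReal _ (by positivity)]
    have d1 : ‖x - y‖ ≤ dist (x, t) (y, s) := by
      rw [← dist_eq_norm, Prod.dist_eq]; exact le_max_left _ _
    have d2 : |t - s| ≤ dist (x, t) (y, s) := by
      rw [← Real.dist_eq, Prod.dist_eq]; exact le_max_right _ _
    have e1 := hx y x t h1
    have e2 := (le_abs_self _).trans (ht y t s h1 h2)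
    have e3 : c * (t - s) ≤ |c| * |t - s| := by rw [← abs_mul]; exact le_abs_self _
    have f1 := mul_le_mul_of_nonneg_left d1 hKpos.le
    have f2 := mul_le_mul_of_nonneg_left d2 hL0
    have f3 := mul_le_mul_of_nonneg_left d2 (abs_nonneg c)
    simp only
    nlinarith
  exact ⟨_, fin u₁ sl₁ fun x t s ht hs => (tl x t s ht hs).1,
    fin u₂ sl₂ fun x t s ht hs => (tl x t s ht hs).2⟩
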